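/- Let Q : ℝ≥0 → Q̄_n be sufficiently exciting. Then for every connected interconnection Γ = [γ_ij] ∈ ℝ^{p×p}, the solutions x_i : ℝ≥0 → ℝ^n of the array ẋ_i(t) = Q_t Σ_{j≠i} γ_ij (x_j(t) − x_i(t)), i = 1,…,p, synchronize to the constant trajectory x̄(t) ≡ (r^T ⊗ I_n) x(0), where x(0) ∈ ℝ^{np} stacks x_1(0),…,x_p(0) and r ∈ ℝ^p satisfies r^T Γ = 0 and r^T 1 = 1; that is, |x_i(t) − x̄(t)| → 0 as t → ∞ for each i. -/

import Mathlib

open Matrix MeasureTheory Filter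
open scoped Kronecker

noncomputable section

/-- Euclidean norm of a vector. -/
def eunorm {ι : Type*} [Fintype ι] (v : ι → ℝ) : ℝ := Real.sqrt (∑ i, v i ^ 2)

/-- Spectral (induced 2-) norm of a matrix. -/
def specNorm {m n : Type*} [Fintype m] [Fintype n] (M : Matrix m n ℝ) : ℝ :=
  sSup {c : ℝ | ∃ v : n → ℝ, eunorm v ≤ 1 ∧ c = eunorm (M.mulVec v)}

/-- Smallest singular value of a matrix. -/
def sigmaMin {m n : Type*} [Fintype m] [Fintype n] (M : Matrix m n ℝ) : ℝ :=
  sInf {c : ℝ | ∃ v : n → ℝ, eunorm v = 1 ∧ c = eunorm (M.mulVec v)}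

/-- Largest singular value of a matrix. -/
def sigmaMax {m n : Type*} [Fintype m] [Fintype n] (M : Matrix m n ℝ) : ℝ :=
  sSup {c : ℝ | ∃ v : n → ℝ, eunorm v = 1 ∧ c = eunorm (M.mulVec v)}

/-- A continuous-time interconnection matrix. -/
def IsInterconnection {p : ℕ} (Γ : Matrix (Fin p) (Fin p) ℝ) : Prop :=
  (∀ i j, i ≠ j → 0 ≤ Γ i j) ∧
  ∀ i, Γ i i = -∑ j ∈ Finset.univ.filter (fun j => j ≠ i), Γ i j

/-- Connectedness of the graph of a matrix. -/
def ConnectedMat {p : ℕ} (Γ : Matrix (Fin p) (Fin p) ℝ) : Prop :=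
  ∃ v : Fin p, ∀ u : Fin p, Relation.ReflTransGen (fun i j => 0 < Γ i j) u v

/-- Membership in `Q̄_n`: symmetric positive semidefinite with spectral norm at most 1. -/
def InQbar {n : ℕ} (R : Matrix (Fin n) (Fin n) ℝ) : Prop :=
  R.PosSemidef ∧ specNorm R ≤ 1

/-- `δ(ε, T) = min{ε/2, ε³/(240 T⁵)}`. -/
def deltaCT (ε T : ℝ) : ℝ := min (ε / 2) (ε ^ 3 / (240 * T ^ 5))

/-- Sufficient excitation for `Q : ℝ≥0 → Q_n`. -/
def SuffExcitingCT {n : ℕ} (Q : ℝ → Matrix (Fin n) (Fin n) ℝ) : Prop :=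
  ∃ ε T : ℕ → ℝ, (∀ i, 0 < ε i) ∧ (∀ i, 0 < T i) ∧
    (∀ i, ε i ≤ sigmaMin (Matrix.of fun a b =>
      ∫ t in (∑ j ∈ Finset.range i, T j)..((∑ j ∈ Finset.range i, T j) + T i), Q t a b)) ∧
    Tendsto (fun N => ∑ i ∈ Finset.range N, deltaCT (ε i) (T i)) atTop atTop

/-- Persistence of excitation for `Q : ℝ≥0 → Q_n`. -/
def PersExcitingCT {n : ℕ} (Q : ℝ → Matrix (Fin n) (Fin n) ℝ) : Prop :=
  ∃ ε T : ℝ, 0 < ε ∧ 0 < T ∧ ∀ t : ℝ, 0 ≤ t →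
    ε ≤ sigmaMin (Matrix.of fun a b => ∫ s in t..(t + T), Q s a b)

section StochasticPowers

variable {ι : Type*} [Fintype ι]

theorem Matrix.pow_mulVec_eq_self [DecidableEq ι] {A : Matrix ι ι ℝ} {w : ι → ℝ} (h : A *ᵥ w = w)
    (m : ℕ) : (A ^ m) *ᵥ w = w := by
  induction m with
  | zero => simp
  | succ m ih => rw [pow_succ, ← Matrix.mulVec_mulVec, h, ih]

theorem Matrix.vecMul_pow_eq_self [DecidableEq ι] {A : Matrix ι ι ℝ} {r : ι → ℝ} (h : r ᵥ* A = r)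
    (m : ℕ) : r ᵥ* (A ^ m) = r := by
  induction m with
  | zero => simp
  | succ m ih => rw [pow_succ, ← Matrix.vecMul_vecMul, ih, h]

/-- If every node reaches `v` and the diagonal is positive, some power of `A` has a positive
column `v`. -/
theorem Matrix.exists_pow_column_pos [DecidableEq ι] {A : Matrix ι ι ℝ} (hA : ∀ i j, 0 ≤ A i j)
    {v : ι} (hv : 0 < A v v) (hreach : ∀ u, Relation.ReflTransGen (fun i j => 0 < A i j) u v) :
    ∃ m : ℕ, ∀ u, 0 < (A ^ m) u v := by
  have hex : ∀ u, ∃ m : ℕ, 0 < (A ^ m) u v := by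
    intro u
    induction hreach u using Relation.ReflTransGen.head_induction_on with
    | refl => exact ⟨0, by simp⟩
    | @head a c hac _ ih =>
      obtain ⟨m, hm⟩ := ih
      refine ⟨m + 1, ?_⟩
      rw [pow_succ', Matrix.mul_apply]
      exact Finset.sum_pos' (fun k _ => mul_nonneg (hA a k) (pow_apply_nonneg hA m k v))
        ⟨c, Finset.mem_univ _, mul_pos hac hm⟩
  choose m hm using hex
  have hmono : ∀ u k, 0 < (A ^ (m u + k)) u v := by
    intro u k
    induction k with
    | zero => exact hm u
    | succ k ih =>
      rw [← add_assoc, pow_succ, Matrix.mul_apply]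
      exact Finset.sum_pos' (fun l _ => mul_nonneg (pow_apply_nonneg hA _ u l) (hA l v))
        ⟨v, Finset.mem_univ _, mul_pos ih hv⟩
  refine ⟨∑ u, m u, fun u => ?_⟩
  have hle : m u ≤ ∑ u, m u := Finset.single_le_sum (fun _ _ => Nat.zero_le _) (Finset.mem_univ u)
  rw [← Nat.add_sub_cancel' hle]
  exact hmono u _

/-- A row-stochastic matrix with a column bounded below by `α` shrinks oscillation by `1 - α`. -/
theorem Matrix.mulVec_mem_Icc_of_column_ge {B : Matrix ι ι ℝ} (hB : ∀ i j, 0 ≤ B i j)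
    (hB1 : ∀ i, ∑ j, B i j = 1) {v : ι} {α : ℝ} (hα : ∀ i, α ≤ B i v)
    {w : ι → ℝ} {a s : ℝ} (hw : ∀ i, w i ∈ Set.Icc a (a + s)) (i : ι) :
    (B *ᵥ w) i ∈ Set.Icc (α * w v + (1 - α) * a) (α * w v + (1 - α) * a + (1 - α) * s) := by
  classical
  have hC : ∀ j, 0 ≤ B i j - (if j = v then α else 0) := by
    intro j
    split_ifs with h
    · subst h; linarith [hα i]
    · simpa using hB i j
  have hC1 : ∑ j, (B i j - (if j = v then α else 0)) = 1 - α := by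
    simp [Finset.sum_sub_distrib, hB1]
  have hsplit : (B *ᵥ w) i = α * w v + ∑ j, (B i j - (if j = v then α else 0)) * w j := by
    simp [Matrix.mulVec, dotProduct, sub_mul, Finset.sum_sub_distrib]
  have hlow : ∑ j, (B i j - (if j = v then α else 0)) * a
      ≤ ∑ j, (B i j - (if j = v then α else 0)) * w j :=
    Finset.sum_le_sum fun j _ => mul_le_mul_of_nonneg_left (hw j).1 (hC j)
  have hup : ∑ j, (B i j - (if j = v then α else 0)) * w j
      ≤ ∑ j, (B i j - (if j = v then α else 0)) * (a + s) :=
    Finset.sum_le_sum fun j _ => mul_le_mul_of_nonneg_left (hw j).2 (hC j)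
  rw [← Finset.sum_mul, hC1] at hlow hup
  rw [hsplit]
  constructor <;> linarith

/-- Powers of a row-stochastic matrix contract the annihilator of a left fixed vector. -/
theorem Matrix.exists_pow_contracts [DecidableEq ι] {A : Matrix ι ι ℝ} (hA : ∀ i j, 0 ≤ A i j)
    (hA1 : A *ᵥ 1 = 1) {v : ι} (hv : 0 < A v v)
    (hreach : ∀ u, Relation.ReflTransGen (fun i j => 0 < A i j) u v)
    {r : ι → ℝ} (hr : r ᵥ* A = r) (hr1 : ∑ i, r i = 1) :
    ∃ N : ℕ, ∀ w : ι → ℝ, r ⬝ᵥ w = 0 → (A ^ N *ᵥ w) ⬝ᵥ (A ^ N *ᵥ w) ≤ 1 / 2 * (w ⬝ᵥ w) := by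
  obtain ⟨m, hm⟩ := exists_pow_column_pos hA hv hreach
  have : Nonempty ι := ⟨v⟩
  obtain ⟨u, hu⟩ := Finite.exists_min fun i => (A ^ m) i v
  set α := (A ^ m) u v
  have hα : 0 < α := hm u
  have hB := pow_apply_nonneg hA m
  have hB1 : ∀ i, ∑ j, (A ^ m) i j = 1 := by
    intro i
    have := congrFun (pow_mulVec_eq_self hA1 m) i
    simpa [Matrix.mulVec, dotProduct] using this
  have hα1 : α ≤ 1 := by
    rw [← hB1 u]
    exact Finset.single_le_sum (f := fun j => (A ^ m) u j) (fun j _ => hB u j) (Finset.mem_univ v)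
  have hiter : ∀ (w : ι → ℝ) (a s : ℝ), (∀ i, w i ∈ Set.Icc a (a + s)) → ∀ k : ℕ,
      ∃ b, ∀ i, (((A ^ m) ^ k) *ᵥ w) i ∈ Set.Icc b (b + (1 - α) ^ k * s) := by
    intro w a s hw k
    induction k with
    | zero => exact ⟨a, by simpa using hw⟩
    | succ k ih =>
      obtain ⟨b, hb⟩ := ih
      refine ⟨α * ((A ^ m) ^ k *ᵥ w) v + (1 - α) * b, fun i => ?_⟩
      rw [pow_succ' (A ^ m), ← Matrix.mulVec_mulVec, pow_succ' (1 - α), mul_assoc]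
      exact mulVec_mem_Icc_of_column_ge hB hB1 hu hb i
  set R := ∑ j, |r j| with hR
  have htend : Tendsto (fun k : ℕ => (Fintype.card ι : ℝ) * (R * (2 * (1 - α) ^ k)) ^ 2) atTop
      (nhds 0) := by
    have h := tendsto_pow_atTop_nhds_zero_of_lt_one (sub_nonneg.2 hα1) (by linarith : 1 - α < 1)
    simpa using (((h.const_mul 2).const_mul R).pow 2).const_mul (Fintype.card ι : ℝ)
  obtain ⟨k, hk⟩ := (htend.eventually_lt_const (by norm_num : (0 : ℝ) < 1 / 2)).exists
  refine ⟨m * k, fun w hrw => ?_⟩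
  have hww : 0 ≤ w ⬝ᵥ w := Finset.sum_nonneg fun i _ => mul_self_nonneg _
  have hwi : ∀ i, w i ∈ Set.Icc (-√(w ⬝ᵥ w)) (-√(w ⬝ᵥ w) + 2 * √(w ⬝ᵥ w)) := by
    intro i
    have h : |w i| ≤ √(w ⬝ᵥ w) := by
      refine Real.abs_le_sqrt ?_
      rw [sq]
      exact Finset.single_le_sum (f := fun i => w i * w i) (fun i _ => mul_self_nonneg _)
        (Finset.mem_univ i)
    constructor <;> linarith [abs_le.1 h]
  obtain ⟨b, hb⟩ := hiter w _ _ hwi k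
  rw [← pow_mul] at hb
  set y := A ^ (m * k) *ᵥ w with hy
  have hry : ∑ j, r j * y j = 0 := by
    have : r ⬝ᵥ y = 0 := by
      rw [hy, Matrix.dotProduct_mulVec, vecMul_pow_eq_self hr, hrw]
    exact this
  have hyi : ∀ i, |y i| ≤ R * ((1 - α) ^ k * (2 * √(w ⬝ᵥ w))) := by
    intro i
    have hsum : y i = ∑ j, r j * (y i - y j) := by
      simp [mul_sub, Finset.sum_sub_distrib, ← Finset.sum_mul, hr1, hry]
    rw [hsum, hR, Finset.sum_mul]
    refine (Finset.abs_sum_le_sum_abs _ _).trans (Finset.sum_le_sum fun j _ => ?_)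
    rw [abs_mul]
    refine mul_le_mul_of_nonneg_left ?_ (abs_nonneg _)
    rw [abs_le]
    constructor <;> linarith [(hb i).1, (hb i).2, (hb j).1, (hb j).2]
  calc y ⬝ᵥ y ≤ ∑ _i : ι, (R * (2 * (1 - α) ^ k)) ^ 2 * (w ⬝ᵥ w) := by
        refine Finset.sum_le_sum fun i _ => ?_
        have h := sq_le_sq' (by linarith [abs_nonneg (y i), hyi i]) (hyi i)
        rw [sq_abs] at h
        calc y i * y i = y i ^ 2 := by ring
          _ ≤ _ := h
          _ = (R * (2 * (1 - α) ^ k)) ^ 2 * √(w ⬝ᵥ w) ^ 2 := by ring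
          _ = _ := by rw [Real.sq_sqrt hww]
    _ = ((Fintype.card ι : ℝ) * (R * (2 * (1 - α) ^ k)) ^ 2) * (w ⬝ᵥ w) := by
        simp [mul_assoc]
    _ ≤ _ := mul_le_mul_of_nonneg_right hk.le hww

/-- If a power of `1 + h • Γ` contracts the hyperplane `r ⬝ᵥ w = 0`, then `Γ` has a quadratic
Lyapunov function there. -/
theorem Matrix.exists_lyapunov_of_pow_contracts [DecidableEq ι] {Γ : Matrix ι ι ℝ} {h : ℝ}
    (hh : 0 < h) {r : ι → ℝ} {N : ℕ}
    (hN : ∀ w : ι → ℝ, r ⬝ᵥ w = 0 →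
      ((1 + h • Γ) ^ N *ᵥ w) ⬝ᵥ ((1 + h • Γ) ^ N *ᵥ w) ≤ 1 / 2 * (w ⬝ᵥ w)) :
    ∃ P : Matrix ι ι ℝ, Pᵀ = P ∧ (∀ w, r ⬝ᵥ w = 0 → 1 / 2 * (w ⬝ᵥ w) ≤ w ⬝ᵥ (P *ᵥ w)) ∧
      ∃ c > 0, ∀ w, r ⬝ᵥ w = 0 → c * (w ⬝ᵥ w) ≤ -(w ⬝ᵥ ((P * Γ) *ᵥ w)) := by
  set A := 1 + h • Γ with hA
  set P := ∑ k ∈ Finset.range N, (A ^ k)ᵀ * A ^ k with hP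
  have hPs : Pᵀ = P := by simp [hP, Matrix.transpose_sum, Matrix.transpose_mul]
  have hF : ∀ w, w ⬝ᵥ (P *ᵥ w) = ∑ k ∈ Finset.range N, (A ^ k *ᵥ w) ⬝ᵥ (A ^ k *ᵥ w) := by
    intro w
    rw [hP, Matrix.sum_mulVec, dotProduct_sum]
    refine Finset.sum_congr rfl fun k _ => ?_
    rw [← Matrix.mulVec_mulVec, Matrix.dotProduct_mulVec, Matrix.vecMul_transpose]
  have hFnn : ∀ w, 0 ≤ w ⬝ᵥ (P *ᵥ w) := by
    intro w
    rw [hF]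
    exact Finset.sum_nonneg fun k _ => Finset.sum_nonneg fun i _ => mul_self_nonneg _
  have htel : ∀ w, (A *ᵥ w) ⬝ᵥ (P *ᵥ (A *ᵥ w)) - w ⬝ᵥ (P *ᵥ w)
      = (A ^ N *ᵥ w) ⬝ᵥ (A ^ N *ᵥ w) - w ⬝ᵥ w := by
    intro w
    rw [hF, hF, ← Finset.sum_sub_distrib]
    have := Finset.sum_range_sub (fun k => (A ^ k *ᵥ w) ⬝ᵥ (A ^ k *ᵥ w)) N
    simp only [pow_zero, Matrix.one_mulVec] at this
    rw [← this]
    refine Finset.sum_congr rfl fun k _ => ?_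
    rw [Matrix.mulVec_mulVec, ← pow_succ]
  refine ⟨P, hPs, fun w hw => ?_, 1 / (4 * h), by positivity, fun w hw => ?_⟩
  · linarith [htel w, hFnn (A *ᵥ w), hN w hw]
  · have hexp : (A *ᵥ w) ⬝ᵥ (P *ᵥ (A *ᵥ w)) = w ⬝ᵥ (P *ᵥ w)
        + 2 * h * (w ⬝ᵥ ((P * Γ) *ᵥ w)) + h ^ 2 * ((Γ *ᵥ w) ⬝ᵥ (P *ᵥ (Γ *ᵥ w))) := by
      have hsym : (Γ *ᵥ w) ⬝ᵥ (P *ᵥ w) = w ⬝ᵥ (P *ᵥ (Γ *ᵥ w)) := by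
        rw [Matrix.dotProduct_mulVec, ← Matrix.mulVec_transpose, hPs, dotProduct_comm]
      rw [hA, ← Matrix.mulVec_mulVec]
      simp only [Matrix.add_mulVec, Matrix.one_mulVec, Matrix.smul_mulVec, Matrix.mulVec_add,
        Matrix.mulVec_smul, add_dotProduct, dotProduct_add, smul_dotProduct, dotProduct_smul,
        smul_eq_mul, hsym]
      ring
    have h1 := htel w
    have h2 := hN w hw
    have h3 : 0 ≤ h ^ 2 * ((Γ *ᵥ w) ⬝ᵥ (P *ᵥ (Γ *ᵥ w))) := mul_nonneg (sq_nonneg _) (hFnn _)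
    rw [div_mul_eq_mul_div, div_le_iff₀ (by positivity)]
    linarith

end StochasticPowers

section QuadraticForms

variable {κ : Type*} [Fintype κ]

theorem eunorm_sq (v : κ → ℝ) : eunorm v ^ 2 = v ⬝ᵥ v := by
  rw [eunorm, Real.sq_sqrt (Finset.sum_nonneg fun i _ => sq_nonneg _)]
  simp [dotProduct, sq]

theorem eunorm_nonneg (v : κ → ℝ) : 0 ≤ eunorm v := Real.sqrt_nonneg _

theorem eunorm_smul (c : ℝ) (v : κ → ℝ) : eunorm (c • v) = |c| * eunorm v := by
  rw [← abs_of_nonneg (eunorm_nonneg (c • v)), ← abs_of_nonneg (eunorm_nonneg v), ← abs_mul,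
    ← sq_eq_sq_iff_abs_eq_abs, mul_pow, eunorm_sq, eunorm_sq]
  simp [sq, mul_assoc]

theorem dotProduct_self_nonneg_real (v : κ → ℝ) : 0 ≤ v ⬝ᵥ v :=
  Finset.sum_nonneg fun _ _ => mul_self_nonneg _

theorem eunorm_pos {v : κ → ℝ} (hv : v ≠ 0) : 0 < eunorm v := by
  refine (eunorm_nonneg v).lt_of_ne' fun h => hv ?_
  have := eunorm_sq v
  rw [h] at this
  exact dotProduct_self_eq_zero.1 (by simpa using this.symm)

theorem eunorm_inv_smul_self {v : κ → ℝ} (hv : v ≠ 0) : eunorm ((eunorm v)⁻¹ • v) = 1 := by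
  rw [eunorm_smul, abs_of_pos (inv_pos.2 (eunorm_pos hv)), inv_mul_cancel₀ (eunorm_pos hv).ne']

theorem Matrix.dotProduct_mulVec_eq_sum (S : Matrix κ κ ℝ) (u w : κ → ℝ) :
    u ⬝ᵥ (S *ᵥ w) = ∑ i, ∑ j, S i j * (u i * w j) := by
  simp only [dotProduct, Matrix.mulVec, Finset.mul_sum]
  exact Finset.sum_congr rfl fun i _ => Finset.sum_congr rfl fun j _ => by ring

theorem Matrix.dotProduct_mulVec_self_le (M : Matrix κ κ ℝ) (v : κ → ℝ) :
    (M *ᵥ v) ⬝ᵥ (M *ᵥ v) ≤ (∑ i, ∑ j, M i j ^ 2) * (v ⬝ᵥ v) := by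
  rw [Finset.sum_mul]
  refine Finset.sum_le_sum fun i _ => ?_
  have := Finset.sum_mul_sq_le_sq_mul_sq Finset.univ (M i) v
  simpa [Matrix.mulVec, dotProduct, sq] using this

theorem eunorm_mulVec_le_of_specNorm_le_one {M : Matrix κ κ ℝ} (hM : specNorm M ≤ 1)
    (v : κ → ℝ) : eunorm (M *ᵥ v) ≤ eunorm v := by
  rcases eq_or_ne v 0 with rfl | hv
  · simp
  have hbdd : BddAbove {c : ℝ | ∃ v : κ → ℝ, eunorm v ≤ 1 ∧ c = eunorm (M.mulVec v)} := by
    refine ⟨√(∑ i, ∑ j, M i j ^ 2), ?_⟩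
    rintro c ⟨w, hw, rfl⟩
    refine Real.le_sqrt_of_sq_le ?_
    rw [eunorm_sq]
    refine (M.dotProduct_mulVec_self_le w).trans (mul_le_of_le_one_right
      (Finset.sum_nonneg fun i _ => Finset.sum_nonneg fun j _ => sq_nonneg _) ?_)
    rw [← eunorm_sq]
    exact pow_le_one₀ (eunorm_nonneg w) hw
  have h := (le_csSup hbdd ⟨_, (eunorm_inv_smul_self hv).le, rfl⟩).trans hM
  rw [Matrix.mulVec_smul, eunorm_smul, abs_of_pos (inv_pos.2 (eunorm_pos hv)),
    inv_mul_le_one₀ (eunorm_pos hv)] at h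
  exact h

theorem le_eunorm_mulVec_of_le_sigmaMin {M : Matrix κ κ ℝ} {ε : ℝ} (hM : ε ≤ sigmaMin M)
    {v : κ → ℝ} (hv : eunorm v = 1) : ε ≤ eunorm (M *ᵥ v) := by
  refine hM.trans (csInf_le ⟨0, ?_⟩ ⟨v, hv, rfl⟩)
  rintro c ⟨w, -, rfl⟩
  exact eunorm_nonneg _

/-- For a positive semidefinite matrix, the smallest singular value bounds the quadratic form. -/
theorem Matrix.PosSemidef.mul_dotProduct_le_of_le_sigmaMin [DecidableEq κ] {M : Matrix κ κ ℝ}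
    (hM : M.PosSemidef) {ε : ℝ} (hε : ε ≤ sigmaMin M) (v : κ → ℝ) :
    ε * (v ⬝ᵥ v) ≤ v ⬝ᵥ (M *ᵥ v) := by
  have hH : (M - ε • (1 : Matrix κ κ ℝ)).IsHermitian := by
    refine hM.isHermitian.sub ?_
    simp [Matrix.IsHermitian]
  have hpsd : (M - ε • (1 : Matrix κ κ ℝ)).PosSemidef := by
    rw [hH.posSemidef_iff_eigenvalues_nonneg]
    intro i
    set μ := hH.eigenvalues i with hμ
    set u : κ → ℝ := (hH.eigenvectorBasis i).ofLp with hu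
    have hMu : M *ᵥ u = (μ + ε) • u := by
      have h := hH.mulVec_eigenvectorBasis i
      rw [Matrix.sub_mulVec, Matrix.smul_mulVec, Matrix.one_mulVec] at h
      rw [add_smul, hμ, hu, ← h, sub_add_cancel]
    have hu1 : eunorm u = 1 := by
      have h := hH.eigenvectorBasis.orthonormal.1 i
      rw [EuclideanSpace.norm_eq] at h
      simpa [eunorm] using h
    have huu : u ⬝ᵥ u = 1 := by rw [← eunorm_sq, hu1, one_pow]
    have hnn : 0 ≤ μ + ε := by
      have h := hM.dotProduct_mulVec_nonneg u
      simpa [hMu, huu] using h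
    have h := le_eunorm_mulVec_of_le_sigmaMin hε hu1
    rw [hMu, eunorm_smul, hu1, mul_one, abs_of_nonneg hnn] at h
    simpa using h
  have h := hpsd.dotProduct_mulVec_nonneg v
  simp only [star_trivial, Matrix.sub_mulVec, Matrix.smul_mulVec, Matrix.one_mulVec,
    dotProduct_sub, dotProduct_smul, smul_eq_mul] at h
  linarith

theorem Matrix.PosSemidef.dotProduct_mulVec_symm {M : Matrix κ κ ℝ} (hM : M.PosSemidef)
    (u v : κ → ℝ) : u ⬝ᵥ (M *ᵥ v) = v ⬝ᵥ (M *ᵥ u) := by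
  have hT : Mᵀ = M := by simpa [Matrix.IsHermitian] using hM.isHermitian
  rw [Matrix.dotProduct_mulVec, ← Matrix.mulVec_transpose, hT, dotProduct_comm]

theorem Matrix.PosSemidef.quadratic_le_two_mul_add {M : Matrix κ κ ℝ} (hM : M.PosSemidef)
    (u v : κ → ℝ) :
    u ⬝ᵥ (M *ᵥ u) ≤ 2 * (v ⬝ᵥ (M *ᵥ v)) + 2 * ((v - u) ⬝ᵥ (M *ᵥ (v - u))) := by
  have h := hM.dotProduct_mulVec_nonneg ((2 : ℝ) • v - u)
  have hs := hM.dotProduct_mulVec_symm u v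
  simp only [star_trivial, Matrix.mulVec_sub, Matrix.mulVec_smul, sub_dotProduct, dotProduct_sub,
    smul_dotProduct, dotProduct_smul, smul_eq_mul] at h ⊢
  linarith

end QuadraticForms

section Qbar

variable {n : ℕ} {R : Matrix (Fin n) (Fin n) ℝ}

theorem InQbar.quadratic_nonneg (hR : InQbar R) (v : Fin n → ℝ) : 0 ≤ v ⬝ᵥ (R *ᵥ v) := by
  simpa using hR.1.dotProduct_mulVec_nonneg v

theorem InQbar.quadratic_le (hR : InQbar R) (v : Fin n → ℝ) : v ⬝ᵥ (R *ᵥ v) ≤ v ⬝ᵥ v := by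
  have h1 := eunorm_mulVec_le_of_specNorm_le_one hR.2 v
  have h2 : (R *ᵥ v) ⬝ᵥ (R *ᵥ v) ≤ v ⬝ᵥ v := by
    rw [← eunorm_sq, ← eunorm_sq]
    exact pow_le_pow_left₀ (eunorm_nonneg _) h1 2
  have h3 := dotProduct_self_nonneg_real (v - R *ᵥ v)
  simp only [sub_dotProduct, dotProduct_sub, dotProduct_comm (R *ᵥ v) v] at h3
  linarith

theorem InQbar.mulVec_dotProduct_self_le (hR : InQbar R) (v : Fin n → ℝ) :
    (R *ᵥ v) ⬝ᵥ (R *ᵥ v) ≤ v ⬝ᵥ (R *ᵥ v) := by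
  have h1 := hR.quadratic_nonneg (v - R *ᵥ v)
  have h2 := hR.quadratic_le (R *ᵥ v)
  have h3 := hR.1.dotProduct_mulVec_symm v (R *ᵥ v)
  simp only [Matrix.mulVec_sub, sub_dotProduct, dotProduct_sub] at h1
  linarith

end Qbar

open scoped MatrixOrder in
/-- An inequality between quadratic forms on the hyperplane `r ⬝ᵥ w = 0` persists after taking the
Kronecker product with a positive semidefinite matrix. -/
theorem Matrix.PosSemidef.sum_quadratic_le {ι κ : Type*} [Fintype ι] [Fintype κ] [DecidableEq κ]
    {S : Matrix ι ι ℝ} {r : ι → ℝ} {c : ℝ} (hS : ∀ w, r ⬝ᵥ w = 0 → c * (w ⬝ᵥ w) ≤ w ⬝ᵥ (S *ᵥ w))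
    {R : Matrix κ κ ℝ} (hR : R.PosSemidef) {z : ι → κ → ℝ} (hz : ∀ a, ∑ i, r i * z i a = 0) :
    c * ∑ i, z i ⬝ᵥ (R *ᵥ z i) ≤ ∑ i, ∑ j, S i j * (z i ⬝ᵥ (R *ᵥ z j)) := by
  obtain ⟨B, hB⟩ : ∃ B : Matrix κ κ ℝ, R = Bᵀ * B := by
    obtain ⟨B, hB⟩ := CStarAlgebra.nonneg_iff_eq_star_mul_self.1 hR.nonneg
    exact ⟨B, by simpa [Matrix.star_eq_conjTranspose] using hB⟩
  have hform : ∀ i j, z i ⬝ᵥ (R *ᵥ z j) = ∑ b, (B *ᵥ z i) b * (B *ᵥ z j) b := by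
    intro i j
    rw [hB, ← Matrix.mulVec_mulVec, Matrix.dotProduct_mulVec, Matrix.vecMul_transpose]
    rfl
  have hW : ∀ b, r ⬝ᵥ (fun i => (B *ᵥ z i) b) = 0 := by
    intro b
    simp only [dotProduct, Matrix.mulVec, Finset.mul_sum]
    rw [Finset.sum_comm]
    refine Finset.sum_eq_zero fun a _ => ?_
    have : ∑ i, r i * (B b a * z i a) = B b a * ∑ i, r i * z i a := by
      rw [Finset.mul_sum]
      exact Finset.sum_congr rfl fun i _ => by ring
    rw [this, hz, mul_zero]
  have h := Finset.sum_le_sum fun b (_ : b ∈ Finset.univ) => hS _ (hW b)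
  have hl : ∑ b, c * ((fun i => (B *ᵥ z i) b) ⬝ᵥ (fun i => (B *ᵥ z i) b))
      = c * ∑ i, z i ⬝ᵥ (R *ᵥ z i) := by
    rw [← Finset.mul_sum, Finset.sum_congr rfl fun i _ => hform i i, Finset.sum_comm]
    rfl
  have hr : ∑ b, (fun i => (B *ᵥ z i) b) ⬝ᵥ (S *ᵥ fun i => (B *ᵥ z i) b)
      = ∑ i, ∑ j, S i j * (z i ⬝ᵥ (R *ᵥ z j)) := by
    simp only [Matrix.dotProduct_mulVec_eq_sum S, hform, Finset.mul_sum]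
    rw [Finset.sum_comm]
    refine Finset.sum_congr rfl fun i _ => ?_
    rw [Finset.sum_comm]
  rw [hl, hr] at h
  exact h

theorem deltaCT_le {ε T K : ℝ} (hε : 0 < ε) (hεT : ε ≤ T) (hK : 0 ≤ K) :
    deltaCT ε T ≤ (1 + K) * ε / (1 + K * T ^ 2) := by
  have hT : 0 < T := hε.trans_le hεT
  rw [le_div_iff₀ (by positivity)]
  rcases le_total T 1 with h1 | h1
  · have hT2 : T ^ 2 ≤ 1 := pow_le_one₀ hT.le h1
    calc deltaCT ε T * (1 + K * T ^ 2) ≤ ε / 2 * (1 + K * T ^ 2) :=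
          mul_le_mul_of_nonneg_right (min_le_left _ _) (by positivity)
      _ ≤ ε * (1 + K * 1) := by gcongr; linarith
      _ = _ := by ring
  · have h2 : ε ^ 3 / (240 * T ^ 5) ≤ ε / T ^ 2 := by
      rw [div_le_div_iff₀ (by positivity) (by positivity)]
      have hsq : ε ^ 2 ≤ T ^ 2 := pow_le_pow_left₀ hε.le hεT 2
      calc ε ^ 3 * T ^ 2 = ε * T ^ 2 * ε ^ 2 := by ring
        _ ≤ ε * T ^ 2 * T ^ 2 := by gcongr
        _ = ε * T ^ 4 * 1 := by ring
        _ ≤ ε * T ^ 4 * (240 * T) := by gcongr; linarith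
        _ = _ := by ring
    calc deltaCT ε T * (1 + K * T ^ 2) ≤ ε / T ^ 2 * (1 + K * T ^ 2) :=
          mul_le_mul_of_nonneg_right ((min_le_right _ _).trans h2) (by positivity)
      _ ≤ ε / T ^ 2 * (T ^ 2 + K * T ^ 2) := by gcongr; exact one_le_pow₀ h1
      _ = _ := by field_simp

section Array

variable {p n : ℕ}

theorem intervalIntegrable_univ_sum {ι : Type*} [Fintype ι] {f : ι → ℝ → ℝ} {s u : ℝ}
    (hf : ∀ i, IntervalIntegrable (f i) volume s u) :
    IntervalIntegrable (fun t => ∑ i, f i t) volume s u := by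
  have h := IntervalIntegrable.sum Finset.univ fun i (_ : i ∈ Finset.univ) => hf i
  have heq : ∑ i, f i = fun t => ∑ i, f i t := by
    ext t
    simp
  rwa [heq] at h

theorem intervalIntegrable_quadratic {Q : ℝ → Matrix (Fin n) (Fin n) ℝ} {s u : ℝ}
    (hQ : ∀ a b, IntervalIntegrable (fun t => Q t a b) volume s u) {f g : ℝ → Fin n → ℝ}
    (hf : ∀ a, ContinuousOn (fun t => f t a) (Set.uIcc s u))
    (hg : ∀ a, ContinuousOn (fun t => g t a) (Set.uIcc s u)) :
    IntervalIntegrable (fun t => f t ⬝ᵥ (Q t *ᵥ g t)) volume s u := by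
  simp only [Matrix.dotProduct_mulVec_eq_sum]
  refine intervalIntegrable_univ_sum fun a => intervalIntegrable_univ_sum fun b => ?_
  exact (hQ a b).mul_continuousOn ((hf a).mul (hg b))

theorem dotProduct_integral_mulVec {Q : ℝ → Matrix (Fin n) (Fin n) ℝ} {s u : ℝ}
    (hQ : ∀ a b, IntervalIntegrable (fun t => Q t a b) volume s u) (v : Fin n → ℝ) :
    v ⬝ᵥ ((Matrix.of fun a b => ∫ t in s..u, Q t a b) *ᵥ v) = ∫ t in s..u, v ⬝ᵥ (Q t *ᵥ v) := by
  simp only [Matrix.dotProduct_mulVec_eq_sum, Matrix.of_apply]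
  rw [intervalIntegral.integral_finsetSum fun a _ =>
    intervalIntegrable_univ_sum fun b => (hQ a b).mul_const _]
  refine Finset.sum_congr rfl fun a _ => ?_
  rw [intervalIntegral.integral_finsetSum fun b _ => (hQ a b).mul_const _]
  exact Finset.sum_congr rfl fun b _ => (intervalIntegral.integral_mul_const _ _).symm

/-- The deviations `z i` of the array from its weighted average. -/
structure IsArrayDeviation (Q : ℝ → Matrix (Fin n) (Fin n) ℝ) (Γ : Matrix (Fin p) (Fin p) ℝ)
    (r : Fin p → ℝ) (z : Fin p → ℝ → Fin n → ℝ) : Prop where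
  mem : ∀ t : ℝ, 0 ≤ t → InQbar (Q t)
  integrable : ∀ a b : Fin n, ∀ s u : ℝ, IntervalIntegrable (fun t => Q t a b) volume s u
  hasDerivAt : ∀ i, ∀ t : ℝ, 0 ≤ t → ∀ a,
    HasDerivAt (fun s => z i s a) ((Q t *ᵥ ∑ k, Γ i k • z k t) a) t
  weighted : ∀ t : ℝ, 0 ≤ t → ∀ a, ∑ i, r i * z i t a = 0

/-- The dissipation rate `∑ i, zᵢᵀ Q zᵢ`. -/
def dissipation (Q : ℝ → Matrix (Fin n) (Fin n) ℝ) (z : Fin p → ℝ → Fin n → ℝ) (t : ℝ) : ℝ :=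
  ∑ i, z i t ⬝ᵥ (Q t *ᵥ z i t)

/-- The quadratic function `zᵀ (P ⊗ I) z`. -/
def lyapunovFun (P : Matrix (Fin p) (Fin p) ℝ) (z : Fin p → ℝ → Fin n → ℝ) (t : ℝ) : ℝ :=
  ∑ i, ∑ j, P i j * (z i t ⬝ᵥ z j t)

theorem lyapunovFun_le (P : Matrix (Fin p) (Fin p) ℝ) (z : Fin p → ℝ → Fin n → ℝ) (t : ℝ) :
    lyapunovFun P z t ≤ (1 + ∑ i, ∑ j, |P i j|) * ∑ i, z i t ⬝ᵥ z i t := by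
  set E := ∑ i, z i t ⬝ᵥ z i t with hE
  have hle : ∀ i, z i t ⬝ᵥ z i t ≤ E := fun i =>
    Finset.single_le_sum (f := fun i => z i t ⬝ᵥ z i t)
      (fun i _ => dotProduct_self_nonneg_real _) (Finset.mem_univ i)
  have hE0 : 0 ≤ E := Finset.sum_nonneg fun i _ => dotProduct_self_nonneg_real _
  have habs : ∀ i j, |z i t ⬝ᵥ z j t| ≤ E := by
    intro i j
    have h1 := dotProduct_self_nonneg_real (z i t - z j t)
    have h2 := dotProduct_self_nonneg_real (z i t + z j t)
    simp only [sub_dotProduct, dotProduct_sub, add_dotProduct, dotProduct_add,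
      dotProduct_comm (z j t) (z i t)] at h1 h2
    rw [abs_le]
    constructor <;> linarith [hle i, hle j]
  have h : lyapunovFun P z t ≤ (∑ i, ∑ j, |P i j|) * E := by
    rw [lyapunovFun, Finset.sum_mul]
    refine Finset.sum_le_sum fun i _ => ?_
    rw [Finset.sum_mul]
    refine Finset.sum_le_sum fun j _ => (le_abs_self _).trans ?_
    rw [abs_mul]
    exact mul_le_mul_of_nonneg_left (habs i j) (abs_nonneg _)
  linarith

namespace IsArrayDeviation

variable {Q : ℝ → Matrix (Fin n) (Fin n) ℝ} {Γ : Matrix (Fin p) (Fin p) ℝ} {r : Fin p → ℝ}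
  {z : Fin p → ℝ → Fin n → ℝ}

theorem continuousOn (hz : IsArrayDeviation Q Γ r z) {s u : ℝ} (hs : 0 ≤ s) (hu : 0 ≤ u)
    (i : Fin p) (a : Fin n) : ContinuousOn (fun t => z i t a) (Set.uIcc s u) := fun t ht =>
  (hz.hasDerivAt i t ((le_min hs hu).trans ht.1) a).continuousAt.continuousWithinAt

theorem dissipation_nonneg (hz : IsArrayDeviation Q Γ r z) {t : ℝ} (ht : 0 ≤ t) :
    0 ≤ dissipation Q z t :=
  Finset.sum_nonneg fun _ _ => (hz.mem t ht).quadratic_nonneg _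

theorem intervalIntegrable_dissipation (hz : IsArrayDeviation Q Γ r z) {s u : ℝ} (hs : 0 ≤ s)
    (hu : 0 ≤ u) : IntervalIntegrable (dissipation Q z) volume s u :=
  intervalIntegrable_univ_sum fun i => intervalIntegrable_quadratic
    (fun a b => hz.integrable a b s u) (hz.continuousOn hs hu i) (hz.continuousOn hs hu i)

theorem hasDerivAt_lyapunovFun (hz : IsArrayDeviation Q Γ r z) {P : Matrix (Fin p) (Fin p) ℝ}
    (hP : Pᵀ = P) {t : ℝ} (ht : 0 ≤ t) :
    HasDerivAt (lyapunovFun P z)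
      (2 * ∑ i, ∑ k, (P * Γ) i k * (z i t ⬝ᵥ (Q t *ᵥ z k t))) t := by
  set d : Fin p → Fin n → ℝ := fun i => Q t *ᵥ ∑ k, Γ i k • z k t with hd
  have hdot : ∀ i j, HasDerivAt (fun s => z i s ⬝ᵥ z j s) (d i ⬝ᵥ z j t + z i t ⬝ᵥ d j) t := by
    intro i j
    have h := HasDerivAt.fun_sum (u := Finset.univ) fun a (_ : a ∈ Finset.univ) =>
      (hz.hasDerivAt i t ht a).mul (hz.hasDerivAt j t ht a)
    rw [Finset.sum_add_distrib] at h
    exact h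
  have h : HasDerivAt (lyapunovFun P z)
      (∑ i, ∑ j, P i j * (d i ⬝ᵥ z j t + z i t ⬝ᵥ d j)) t :=
    HasDerivAt.fun_sum fun i _ => HasDerivAt.fun_sum fun j _ => (hdot i j).const_mul _
  convert h using 1
  have hswap : ∑ i, ∑ j, P i j * (d i ⬝ᵥ z j t) = ∑ i, ∑ j, P i j * (z i t ⬝ᵥ d j) := by
    rw [Finset.sum_comm]
    refine Finset.sum_congr rfl fun i _ => Finset.sum_congr rfl fun j _ => ?_
    rw [dotProduct_comm, ← congrFun (congrFun hP j) i, Matrix.transpose_apply]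
  have hlin : ∀ i j, z i t ⬝ᵥ d j = ∑ k, Γ j k * (z i t ⬝ᵥ (Q t *ᵥ z k t)) := by
    intro i j
    simp only [hd, Matrix.mulVec_sum, Matrix.mulVec_smul, dotProduct_sum, dotProduct_smul,
      smul_eq_mul]
  simp only [mul_add, Finset.sum_add_distrib, hswap]
  rw [← two_mul]
  congr 1
  refine Finset.sum_congr rfl fun i _ => ?_
  simp only [hlin, Matrix.mul_apply, Finset.sum_mul, Finset.mul_sum]
  rw [Finset.sum_comm]
  exact Finset.sum_congr rfl fun j _ => Finset.sum_congr rfl fun k _ => by ring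

theorem lyapunovFun_sub_le (hz : IsArrayDeviation Q Γ r z) {P : Matrix (Fin p) (Fin p) ℝ}
    (hP : Pᵀ = P) {c : ℝ} (hc : ∀ w, r ⬝ᵥ w = 0 → c * (w ⬝ᵥ w) ≤ -(w ⬝ᵥ ((P * Γ) *ᵥ w)))
    {s u : ℝ} (hs : 0 ≤ s) (hsu : s ≤ u) :
    lyapunovFun P z u - lyapunovFun P z s ≤ -(2 * c) * ∫ t in s..u, dissipation Q z t := by
  have hu := hs.trans hsu
  have hint : IntervalIntegrable (fun t => 2 * ∑ i, ∑ k, (P * Γ) i k * (z i t ⬝ᵥ (Q t *ᵥ z k t)))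
      volume s u := by
    refine IntervalIntegrable.const_mul ?_ _
    refine intervalIntegrable_univ_sum fun i => intervalIntegrable_univ_sum fun k =>
      IntervalIntegrable.const_mul ?_ _
    exact intervalIntegrable_quadratic (fun a b => hz.integrable a b s u)
      (hz.continuousOn hs hu i) (hz.continuousOn hs hu k)
  rw [← intervalIntegral.integral_eq_sub_of_hasDerivAt (fun t ht =>
    hz.hasDerivAt_lyapunovFun hP ((le_min hs hu).trans ht.1)) hint,
    ← intervalIntegral.integral_const_mul]
  refine intervalIntegral.integral_mono_on hsu hint
    ((hz.intervalIntegrable_dissipation hs hu).const_mul _) fun t ht => ?_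
  have ht0 := hs.trans ht.1
  have h := (hz.mem t ht0).1.sum_quadratic_le (S := -(P * Γ)) (c := c)
    (fun w hw => by simpa [Matrix.neg_mulVec] using hc w hw) (z := fun i => z i t)
    (hz.weighted t ht0)
  simp only [Matrix.neg_apply, neg_mul, Finset.sum_neg_distrib] at h
  rw [dissipation]
  linarith

/-- The squared speed of each coordinate is controlled by the dissipation. -/
theorem sq_deriv_le (hz : IsArrayDeviation Q Γ r z) {t : ℝ} (ht : 0 ≤ t) (i : Fin p)
    (a : Fin n) :
    ((Q t *ᵥ ∑ k, Γ i k • z k t) a) ^ 2 ≤ (∑ j, ∑ k, Γ j k ^ 2) * dissipation Q z t := by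
  have hlin : (Q t *ᵥ ∑ k, Γ i k • z k t) a = ∑ k, Γ i k * (Q t *ᵥ z k t) a := by
    simp [Matrix.mulVec_sum, Matrix.mulVec_smul, Finset.sum_apply]
  rw [hlin]
  refine (Finset.sum_mul_sq_le_sq_mul_sq _ _ _).trans ?_
  have h1 : ∑ k, Γ i k ^ 2 ≤ ∑ j, ∑ k, Γ j k ^ 2 :=
    Finset.single_le_sum (f := fun j => ∑ k, Γ j k ^ 2)
      (fun j _ => Finset.sum_nonneg fun k _ => sq_nonneg _) (Finset.mem_univ i)
  have h2 : ∑ k, (Q t *ᵥ z k t) a ^ 2 ≤ dissipation Q z t := by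
    refine Finset.sum_le_sum fun k _ => ?_
    refine le_trans ?_ ((hz.mem t ht).mulVec_dotProduct_self_le (z k t))
    rw [sq]
    exact Finset.single_le_sum (f := fun a => (Q t *ᵥ z k t) a * (Q t *ᵥ z k t) a)
      (fun a _ => mul_self_nonneg _) (Finset.mem_univ a)
  exact mul_le_mul h1 h2 (Finset.sum_nonneg fun k _ => sq_nonneg _)
    (Finset.sum_nonneg fun j _ => Finset.sum_nonneg fun k _ => sq_nonneg _)

theorem sq_sub_le (hz : IsArrayDeviation Q Γ r z) {s t u : ℝ} (hs : 0 ≤ s) (hst : s ≤ t)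
    (htu : t ≤ u) (i : Fin p) (a : Fin n) :
    (z i t a - z i s a) ^ 2
      ≤ (∑ j, ∑ k, Γ j k ^ 2) * (u - s) * ∫ τ in s..u, dissipation Q z τ := by
  have ht := hs.trans hst
  have hu := ht.trans htu
  set G := ∑ j, ∑ k, Γ j k ^ 2 with hG
  have hG0 : 0 ≤ G := Finset.sum_nonneg fun j _ => Finset.sum_nonneg fun k _ => sq_nonneg _
  have hD : ∫ τ in s..t, dissipation Q z τ ≤ ∫ τ in s..u, dissipation Q z τ := by
    refine intervalIntegral.integral_mono_interval le_rfl hst htu ?_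
      (hz.intervalIntegrable_dissipation hs hu)
    exact (ae_restrict_mem measurableSet_Ioc).mono fun τ hτ =>
      hz.dissipation_nonneg (hs.trans hτ.1.le)
  have hD0 : 0 ≤ ∫ τ in s..t, dissipation Q z τ :=
    intervalIntegral.integral_nonneg hst fun τ hτ => hz.dissipation_nonneg (hs.trans hτ.1)
  set f : ℝ → ℝ := fun τ => (Q τ *ᵥ ∑ k, Γ i k • z k τ) a with hf
  have hfint : IntervalIntegrable f volume s t := by
    have hcont : ∀ b, ContinuousOn (fun τ => (∑ k, Γ i k • z k τ) b) (Set.uIcc s t) := by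
      intro b
      simp only [Finset.sum_apply, Pi.smul_apply, smul_eq_mul]
      exact continuousOn_finsetSum _ fun k _ => continuousOn_const.mul (hz.continuousOn hs ht k b)
    exact intervalIntegrable_univ_sum fun b => (hz.integrable a b s t).mul_continuousOn (hcont b)
  have hftc : ∫ τ in s..t, f τ = z i t a - z i s a :=
    intervalIntegral.integral_eq_sub_of_hasDerivAt (fun τ hτ =>
      hz.hasDerivAt i τ ((le_min hs ht).trans hτ.1) a) hfint
  set Δ := z i t a - z i s a with hΔ
  have hquad : ∀ μ : ℝ, 2 * μ * Δ - μ ^ 2 * (t - s) ≤ G * ∫ τ in s..t, dissipation Q z τ := by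
    intro μ
    have h := intervalIntegral.integral_mono_on hst
      ((hfint.const_mul (2 * μ)).sub (intervalIntegrable_const (c := μ ^ 2)))
      ((hz.intervalIntegrable_dissipation hs ht).const_mul G) fun τ hτ => by
        have h1 := hz.sq_deriv_le (hs.trans hτ.1) i a
        have h2 := sq_nonneg (f τ - μ)
        change 2 * μ * f τ - μ ^ 2 ≤ G * dissipation Q z τ
        have h3 : f τ ^ 2 ≤ G * dissipation Q z τ := h1
        linarith
    rw [intervalIntegral.integral_sub (hfint.const_mul _) intervalIntegrable_const,
      intervalIntegral.integral_const_mul, intervalIntegral.integral_const_mul, hftc,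
      intervalIntegral.integral_const, smul_eq_mul] at h
    linarith
  have hmain : Δ ^ 2 ≤ (t - s) * (G * ∫ τ in s..t, dissipation Q z τ) := by
    rcases hst.eq_or_lt with rfl | hlt
    · simp [hΔ]
    · have hpos : 0 < t - s := sub_pos.2 hlt
      have h := hquad (Δ / (t - s))
      have heq : 2 * (Δ / (t - s)) * Δ - (Δ / (t - s)) ^ 2 * (t - s) = Δ ^ 2 / (t - s) := by
        field_simp
        ring
      rw [heq, div_le_iff₀ hpos] at h
      linarith
  calc Δ ^ 2 ≤ (t - s) * (G * ∫ τ in s..t, dissipation Q z τ) := hmain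
    _ ≤ (u - s) * (G * ∫ τ in s..u, dissipation Q z τ) := by
        have : 0 ≤ u - s := by linarith
        gcongr
    _ = _ := by ring

theorem posSemidef_integral (hz : IsArrayDeviation Q Γ r z) {s u : ℝ} (hs : 0 ≤ s)
    (hsu : s ≤ u) : (Matrix.of fun a b => ∫ t in s..u, Q t a b).PosSemidef := by
  refine .of_dotProduct_mulVec_nonneg ?_ fun v => ?_
  · ext a b
    simp only [Matrix.conjTranspose_apply, Matrix.of_apply, star_trivial]
    refine intervalIntegral.integral_congr fun t ht => ?_
    rw [Set.uIcc_of_le hsu] at ht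
    simpa using (hz.mem t (hs.trans ht.1)).1.isHermitian.apply a b
  · rw [star_trivial, dotProduct_integral_mulVec fun a b => hz.integrable a b s u]
    exact intervalIntegral.integral_nonneg hsu fun t ht =>
      (hz.mem t (hs.trans ht.1)).quadratic_nonneg v

/-- Excitation over a window bounds the initial deviation by the total dissipation. -/
theorem mul_sum_le_integral_dissipation (hz : IsArrayDeviation Q Γ r z) {s T ε : ℝ} (hs : 0 ≤ s)
    (hT : 0 < T) (hε : ε ≤ sigmaMin (Matrix.of fun a b => ∫ t in s..(s + T), Q t a b)) :
    ε * ∑ i, z i s ⬝ᵥ z i s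
      ≤ 2 * (1 + p * n * (∑ j, ∑ k, Γ j k ^ 2) * T ^ 2)
        * ∫ t in s..(s + T), dissipation Q z t := by
  have hsT : s ≤ s + T := by linarith
  have hu : 0 ≤ s + T := hs.trans hsT
  set D := ∫ t in s..(s + T), dissipation Q z t with hD
  set G := ∑ j, ∑ k, Γ j k ^ 2 with hG
  have hconst : ∀ i, IntervalIntegrable (fun t => z i s ⬝ᵥ (Q t *ᵥ z i s)) volume s (s + T) :=
    fun i => intervalIntegrable_quadratic (fun a b => hz.integrable a b _ _)
      (fun a => continuousOn_const) (fun a => continuousOn_const)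
  calc ε * ∑ i, z i s ⬝ᵥ z i s
      ≤ ∑ i, ∫ t in s..(s + T), z i s ⬝ᵥ (Q t *ᵥ z i s) := by
        rw [Finset.mul_sum]
        refine Finset.sum_le_sum fun i _ => ?_
        rw [← dotProduct_integral_mulVec fun a b => hz.integrable a b _ _]
        exact (hz.posSemidef_integral hs hsT).mul_dotProduct_le_of_le_sigmaMin hε _
    _ = ∫ t in s..(s + T), ∑ i, z i s ⬝ᵥ (Q t *ᵥ z i s) :=
        (intervalIntegral.integral_finsetSum fun i _ => hconst i).symm
    _ ≤ ∫ t in s..(s + T), (2 * dissipation Q z t + 2 * (p * n * (G * T * D))) := by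
        refine intervalIntegral.integral_mono_on hsT (intervalIntegrable_univ_sum hconst)
          (((hz.intervalIntegrable_dissipation hs hu).const_mul 2).add intervalIntegrable_const)
          fun t ht => ?_
        have ht0 := hs.trans ht.1
        have hdev : ∑ i, (z i t - z i s) ⬝ᵥ (Q t *ᵥ (z i t - z i s)) ≤ p * n * (G * T * D) := by
          calc ∑ i, (z i t - z i s) ⬝ᵥ (Q t *ᵥ (z i t - z i s))
              ≤ ∑ _i : Fin p, ∑ _a : Fin n, G * T * D := by
                refine Finset.sum_le_sum fun i _ => ((hz.mem t ht0).quadratic_le _).trans ?_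
                refine Finset.sum_le_sum fun a _ => ?_
                have h := hz.sq_sub_le hs ht.1 ht.2 i a
                rw [add_sub_cancel_left, sq] at h
                exact h
            _ = _ := by simp [mul_assoc]
        have hsum : ∑ i, z i s ⬝ᵥ (Q t *ᵥ z i s) ≤ 2 * dissipation Q z t
            + 2 * ∑ i, (z i t - z i s) ⬝ᵥ (Q t *ᵥ (z i t - z i s)) := by
          rw [dissipation, Finset.mul_sum, Finset.mul_sum, ← Finset.sum_add_distrib]
          exact Finset.sum_le_sum fun i _ => (hz.mem t ht0).1.quadratic_le_two_mul_add _ _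
        linarith
    _ = _ := by
        rw [intervalIntegral.integral_add
          ((hz.intervalIntegrable_dissipation hs hu).const_mul 2) intervalIntegrable_const,
          intervalIntegral.integral_const_mul, intervalIntegral.integral_const, smul_eq_mul]
        ring

theorem le_of_le_sigmaMin (hz : IsArrayDeviation Q Γ r z) (hn : 0 < n) {s T ε : ℝ} (hs : 0 ≤ s)
    (hT : 0 < T) (hε : ε ≤ sigmaMin (Matrix.of fun a b => ∫ t in s..(s + T), Q t a b)) :
    ε ≤ T := by
  have hsT : s ≤ s + T := by linarith
  set v : Fin n → ℝ := Pi.single ⟨0, hn⟩ 1 with hv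
  have hvv : v ⬝ᵥ v = 1 := by simp [hv]
  have h := (hz.posSemidef_integral hs hsT).mul_dotProduct_le_of_le_sigmaMin hε v
  rw [dotProduct_integral_mulVec fun a b => hz.integrable a b _ _, hvv, mul_one] at h
  have h2 := intervalIntegral.integral_mono_on hsT
    (intervalIntegrable_quadratic (fun a b => hz.integrable a b s (s + T))
      (f := fun _ => v) (g := fun _ => v) (fun a => continuousOn_const)
      (fun a => continuousOn_const)) (intervalIntegrable_const (c := (1 : ℝ)))
    fun t ht => ((hz.mem t (hs.trans ht.1)).quadratic_le v).trans_eq hvv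
  simp only [intervalIntegral.integral_const, add_sub_cancel_left, smul_eq_mul, mul_one] at h2
  exact h.trans h2

theorem half_sum_le_lyapunovFun (hz : IsArrayDeviation Q Γ r z) {P : Matrix (Fin p) (Fin p) ℝ}
    (hPpos : ∀ w, r ⬝ᵥ w = 0 → 1 / 2 * (w ⬝ᵥ w) ≤ w ⬝ᵥ (P *ᵥ w)) {t : ℝ} (ht : 0 ≤ t) :
    1 / 2 * ∑ i, z i t ⬝ᵥ z i t ≤ lyapunovFun P z t := by
  have h := (Matrix.PosSemidef.one (n := Fin n) (R := ℝ)).sum_quadratic_le hPpos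
    (z := fun i => z i t) (hz.weighted t ht)
  simpa only [Matrix.one_mulVec, lyapunovFun] using h

theorem lyapunovFun_step (hz : IsArrayDeviation Q Γ r z) (hn : 0 < n)
    {P : Matrix (Fin p) (Fin p) ℝ} (hP : Pᵀ = P) {c : ℝ} (hc0 : 0 < c)
    (hc : ∀ w, r ⬝ᵥ w = 0 → c * (w ⬝ᵥ w) ≤ -(w ⬝ᵥ ((P * Γ) *ᵥ w))) :
    ∃ κ > 0, ∀ s T ε : ℝ, 0 ≤ s → 0 < T → 0 < ε →
      ε ≤ sigmaMin (Matrix.of fun a b => ∫ t in s..(s + T), Q t a b) →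
      lyapunovFun P z (s + T) ≤ (1 - κ * deltaCT ε T) * lyapunovFun P z s := by
  set K := p * n * (∑ j, ∑ k, Γ j k ^ 2) with hK
  have hK0 : 0 ≤ K := mul_nonneg (by positivity)
    (Finset.sum_nonneg fun j _ => Finset.sum_nonneg fun k _ => sq_nonneg _)
  set C := 1 + ∑ i, ∑ j, |P i j| with hC
  have hC0 : 0 < C := add_pos_of_pos_of_nonneg one_pos
    (Finset.sum_nonneg fun j _ => Finset.sum_nonneg fun k _ => abs_nonneg _)
  refine ⟨c / (C * (1 + K)), by positivity, fun s T ε hs hT hε hσ => ?_⟩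
  have hdrop := hz.lyapunovFun_sub_le hP hc hs (by linarith : s ≤ s + T)
  have hexc := hz.mul_sum_le_integral_dissipation hs hT hσ
  rw [← hK] at hexc
  have hδ := deltaCT_le hε (hz.le_of_le_sigmaMin hn hs hT hσ) hK0
  have hup := lyapunovFun_le P z s
  rw [← hC] at hup
  set D := ∫ t in s..(s + T), dissipation Q z t
  set E := ∑ i, z i s ⬝ᵥ z i s with hE
  have hE0 : 0 ≤ E := Finset.sum_nonneg fun i _ => dotProduct_self_nonneg_real _
  have hδ0 : 0 ≤ deltaCT ε T := le_min (by positivity) (by positivity)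
  have hD : deltaCT ε T * E ≤ 2 * (1 + K) * D := by
    calc deltaCT ε T * E ≤ (1 + K) * ε / (1 + K * T ^ 2) * E := by gcongr
      _ = (1 + K) * (ε * E) / (1 + K * T ^ 2) := by ring
      _ ≤ (1 + K) * (2 * (1 + K * T ^ 2) * D) / (1 + K * T ^ 2) := by gcongr
      _ = _ := by field_simp
  have hV : c / (C * (1 + K)) * deltaCT ε T * lyapunovFun P z s ≤ 2 * c * D := by
    calc c / (C * (1 + K)) * deltaCT ε T * lyapunovFun P z s
        ≤ c / (C * (1 + K)) * deltaCT ε T * (C * E) := by gcongr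
      _ = c / (1 + K) * (deltaCT ε T * E) := by field_simp
      _ ≤ c / (1 + K) * (2 * (1 + K) * D) := by gcongr
      _ = _ := by field_simp
  linarith

theorem tendsto_sum_zero (hz : IsArrayDeviation Q Γ r z) (hn : 0 < n) (hQ : SuffExcitingCT Q)
    {P : Matrix (Fin p) (Fin p) ℝ} (hP : Pᵀ = P)
    (hPpos : ∀ w, r ⬝ᵥ w = 0 → 1 / 2 * (w ⬝ᵥ w) ≤ w ⬝ᵥ (P *ᵥ w)) {c : ℝ} (hc0 : 0 < c)
    (hc : ∀ w, r ⬝ᵥ w = 0 → c * (w ⬝ᵥ w) ≤ -(w ⬝ᵥ ((P * Γ) *ᵥ w))) :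
    Tendsto (fun t => ∑ i, z i t ⬝ᵥ z i t) atTop (nhds 0) := by
  obtain ⟨κ, hκ, hstep⟩ := hz.lyapunovFun_step hn hP hc0 hc
  obtain ⟨ε, T, hε, hT, hσ, hsum⟩ := hQ
  set τ : ℕ → ℝ := fun i => ∑ j ∈ Finset.range i, T j with hτ
  have hτ0 : ∀ i, 0 ≤ τ i := fun i => Finset.sum_nonneg fun j _ => (hT j).le
  have hE0 : ∀ t, 0 ≤ ∑ i, z i t ⬝ᵥ z i t := fun t =>
    Finset.sum_nonneg fun i _ => dotProduct_self_nonneg_real _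
  have hV0 : ∀ t, 0 ≤ t → 0 ≤ lyapunovFun P z t := fun t ht => by
    linarith [hz.half_sum_le_lyapunovFun hPpos ht, hE0 t]
  have hdecay : ∀ N, lyapunovFun P z (τ N)
      ≤ Real.exp (-(κ * ∑ i ∈ Finset.range N, deltaCT (ε i) (T i))) * lyapunovFun P z 0 := by
    intro N
    induction N with
    | zero => simp [hτ]
    | succ N ih =>
      have h := hstep (τ N) (T N) (ε N) (hτ0 N) (hT N) (hε N) (hσ N)
      have hsucc : τ (N + 1) = τ N + T N := Finset.sum_range_succ _ _
      have hexp : 1 - κ * deltaCT (ε N) (T N) ≤ Real.exp (-(κ * deltaCT (ε N) (T N))) := by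
        linarith [Real.add_one_le_exp (-(κ * deltaCT (ε N) (T N)))]
      rw [hsucc, Finset.sum_range_succ, mul_add, neg_add_rev, Real.exp_add, mul_assoc]
      exact h.trans ((mul_le_mul_of_nonneg_right hexp (hV0 _ (hτ0 N))).trans
        (mul_le_mul_of_nonneg_left ih (Real.exp_pos _).le))
  have hlim : Tendsto (fun N => Real.exp (-(κ * ∑ i ∈ Finset.range N, deltaCT (ε i) (T i)))
      * lyapunovFun P z 0) atTop (nhds 0) := by
    have h := (Real.tendsto_exp_neg_atTop_nhds_zero.comp (hsum.const_mul_atTop hκ)).mul_const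
      (lyapunovFun P z 0)
    simpa using h
  rw [Metric.tendsto_atTop]
  intro η hη
  obtain ⟨N, hN⟩ := (hlim.eventually_lt_const (half_pos hη)).exists
  refine ⟨τ N, fun t ht => ?_⟩
  have ht0 := (hτ0 N).trans ht
  have hmono := hz.lyapunovFun_sub_le hP hc (hτ0 N) ht
  have hint : 0 ≤ 2 * c * ∫ u in τ N..t, dissipation Q z u :=
    mul_nonneg (by positivity) (intervalIntegral.integral_nonneg ht fun u hu =>
      hz.dissipation_nonneg ((hτ0 N).trans hu.1))
  rw [Real.dist_eq, sub_zero, abs_of_nonneg (hE0 t)]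
  linarith [hz.half_sum_le_lyapunovFun hPpos ht0, hdecay N]

end IsArrayDeviation

end Array

section Interconnection

variable {p n : ℕ} {Γ : Matrix (Fin p) (Fin p) ℝ}

theorem IsInterconnection.sum_eq_zero (hΓ : IsInterconnection Γ) (i : Fin p) :
    ∑ j, Γ i j = 0 := by
  have h := Finset.sum_filter_add_sum_filter_not Finset.univ (fun j => j ≠ i) (Γ i)
  have hsingle : Finset.univ.filter (fun j => ¬ j ≠ i) = {i} := by
    ext j
    simp
  rw [hsingle, Finset.sum_singleton, hΓ.2 i, add_neg_cancel] at h
  exact h.symm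

theorem IsInterconnection.exists_lyapunov (hΓ : IsInterconnection Γ) (hconn : ConnectedMat Γ)
    {r : Fin p → ℝ} (hr : r ᵥ* Γ = 0) (hr1 : ∑ i, r i = 1) :
    ∃ P : Matrix (Fin p) (Fin p) ℝ, Pᵀ = P ∧
      (∀ w, r ⬝ᵥ w = 0 → 1 / 2 * (w ⬝ᵥ w) ≤ w ⬝ᵥ (P *ᵥ w)) ∧
      ∃ c > 0, ∀ w, r ⬝ᵥ w = 0 → c * (w ⬝ᵥ w) ≤ -(w ⬝ᵥ ((P * Γ) *ᵥ w)) := by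
  obtain ⟨v, hv⟩ := hconn
  set h : ℝ := (1 + ∑ i, |Γ i i|)⁻¹ with hh
  have hsum : 0 ≤ ∑ i, |Γ i i| := Finset.sum_nonneg fun i _ => abs_nonneg _
  have hpos : 0 < h := inv_pos.2 (by linarith)
  have hdiag : ∀ i, 0 < (1 + h • Γ) i i := by
    intro i
    have hle : |Γ i i| ≤ ∑ i, |Γ i i| :=
      Finset.single_le_sum (f := fun i => |Γ i i|) (fun i _ => abs_nonneg _) (Finset.mem_univ i)
    have hlt : h * |Γ i i| < 1 := by
      rw [hh, inv_mul_lt_one₀ (by linarith)]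
      linarith
    have hneg := mul_le_mul_of_nonneg_left (neg_abs_le (Γ i i)) hpos.le
    simp only [Matrix.add_apply, Matrix.one_apply_eq, Matrix.smul_apply, smul_eq_mul]
    linarith
  have hoff : ∀ i j, i ≠ j → (1 + h • Γ) i j = h * Γ i j := by
    intro i j hij
    simp [Matrix.one_apply_ne hij]
  have hnn : ∀ i j, 0 ≤ (1 + h • Γ) i j := by
    intro i j
    rcases eq_or_ne i j with rfl | hij
    · exact (hdiag i).le
    · rw [hoff i j hij]
      exact mul_nonneg hpos.le (hΓ.1 i j hij)
  have hone : (1 + h • Γ) *ᵥ 1 = 1 := by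
    have hΓ1 : Γ *ᵥ 1 = 0 := by
      ext i
      simpa [Matrix.mulVec, dotProduct] using hΓ.sum_eq_zero i
    rw [Matrix.add_mulVec, Matrix.smul_mulVec, hΓ1, Matrix.one_mulVec, smul_zero, add_zero]
  have hleft : r ᵥ* (1 + h • Γ) = r := by
    rw [Matrix.vecMul_add, Matrix.vecMul_smul, hr, Matrix.vecMul_one, smul_zero, add_zero]
  have hreach : ∀ u, Relation.ReflTransGen (fun i j => 0 < (1 + h • Γ) i j) u v := by
    refine fun u => Relation.ReflTransGen.mono (fun i j hij => ?_) u v (hv u)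
    rcases eq_or_ne i j with rfl | hne
    · exact hdiag i
    · rw [hoff i j hne]
      exact mul_pos hpos hij
  obtain ⟨N, hN⟩ := Matrix.exists_pow_contracts hnn hone (hdiag v) hreach hleft hr1
  exact Matrix.exists_lyapunov_of_pow_contracts hpos hN

/-- Subtracting a constant vector from all states rewrites the coupling through `Γ`. -/
theorem IsInterconnection.sum_filter_smul_sub (hΓ : IsInterconnection Γ)
    (y : Fin p → Fin n → ℝ) (b : Fin n → ℝ) (i : Fin p) :
    ∑ j ∈ Finset.univ.filter (fun j => j ≠ i), Γ i j • (y j - y i)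
      = ∑ j, Γ i j • (y j - b) := by
  have h1 : ∑ j ∈ Finset.univ.filter (fun j => j ≠ i), Γ i j • (y j - y i)
      = ∑ j, Γ i j • (y j - y i) := by
    refine Finset.sum_filter_of_ne fun j _ hne hji => hne ?_
    rw [hji, sub_self, smul_zero]
  have h2 : ∑ j, Γ i j • (y j - b) = ∑ j, Γ i j • (y j - y i) + (∑ j, Γ i j) • (y i - b) := by
    rw [Finset.sum_smul, ← Finset.sum_add_distrib]
    exact Finset.sum_congr rfl fun j _ => by rw [← smul_add, sub_add_sub_cancel]
  rw [h1, h2, hΓ.sum_eq_zero, zero_smul, add_zero]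

end Interconnection

theorem stmt5 {p n : ℕ}
    (Q : ℝ → Matrix (Fin n) (Fin n) ℝ)
    (hQ : ∀ t : ℝ, 0 ≤ t → InQbar (Q t))
    (hQint : ∀ a b : Fin n, ∀ s u : ℝ, IntervalIntegrable (fun t => Q t a b) volume s u)
    (hQse : SuffExcitingCT Q)
    (Γ : Matrix (Fin p) (Fin p) ℝ)
    (hΓ : IsInterconnection Γ) (hconn : ConnectedMat Γ)
    (r : Fin p → ℝ) (hr1 : Matrix.vecMul r Γ = 0) (hr2 : ∑ i, r i = 1)
    (x : Fin p → ℝ → Fin n → ℝ)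
    (hx : ∀ i, ∀ t : ℝ, 0 ≤ t → ∀ a : Fin n,
      HasDerivAt (fun s => x i s a)
        (((Q t).mulVec (∑ j ∈ Finset.univ.filter (fun j => j ≠ i), Γ i j • (x j t - x i t))) a) t)
    (xbar : Fin n → ℝ) (hxbar : xbar = ∑ j, r j • x j 0) :
    ∀ i, Tendsto (fun t => eunorm (x i t - xbar)) atTop (nhds 0) := by
  rcases Nat.eq_zero_or_pos n with rfl | hn
  · intro i
    simp [eunorm]
  have hderiv : ∀ i, ∀ t : ℝ, 0 ≤ t → ∀ a, HasDerivAt (fun s => x i s a - xbar a)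
      ((Q t *ᵥ ∑ k, Γ i k • (x k t - xbar)) a) t := by
    intro i t ht a
    rw [← hΓ.sum_filter_smul_sub (fun j => x j t) xbar i]
    exact (hx i t ht a).sub_const _
  have hconst : ∀ t : ℝ, 0 ≤ t → ∀ a, ∑ i, r i * (x i t a - xbar a) = 0 := by
    intro t ht a
    have hd : ∀ s : ℝ, 0 ≤ s → HasDerivAt (fun s => ∑ i, r i * (x i s a - xbar a)) 0 s := by
      intro s hs
      have h := HasDerivAt.fun_sum (u := Finset.univ) fun i (_ : i ∈ Finset.univ) =>
        (hderiv i s hs a).const_mul (r i)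
      have hvec : ∑ i, r i • (Q s *ᵥ ∑ k, Γ i k • (x k s - xbar)) = 0 := by
        simp only [← Matrix.mulVec_smul, ← Matrix.mulVec_sum, Finset.smul_sum, smul_smul]
        rw [Finset.sum_comm]
        simp only [← Finset.sum_smul]
        have hcol : ∀ k, ∑ i, r i * Γ i k = 0 := fun k => congrFun hr1 k
        simp [hcol]
      have ha := congrFun hvec a
      simp only [Finset.sum_apply, Pi.smul_apply, smul_eq_mul, Pi.zero_apply] at ha
      rwa [ha] at h
    have h0 : ∑ i, r i * (x i 0 a - xbar a) = 0 := by
      have hxa : xbar a = ∑ j, r j * x j 0 a := by simp [hxbar]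
      simp only [mul_sub, Finset.sum_sub_distrib, ← Finset.sum_mul, hr2]
      rw [hxa, one_mul, sub_self]
    rw [← h0]
    exact constant_of_has_deriv_right_zero
      (fun s hs => (hd s hs.1).continuousAt.continuousWithinAt)
      (fun s hs => (hd s hs.1).hasDerivWithinAt) t ⟨ht, le_rfl⟩
  have hz : IsArrayDeviation Q Γ r (fun i t => x i t - xbar) :=
    ⟨hQ, hQint, hderiv, hconst⟩
  obtain ⟨P, hP, hPpos, c, hc0, hc⟩ := hΓ.exists_lyapunov hconn hr1 hr2
  have hlim := hz.tendsto_sum_zero hn hQse hP hPpos hc0 hc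
  intro i
  have hsqrt : Tendsto (fun t => √(∑ i, (x i t - xbar) ⬝ᵥ (x i t - xbar))) atTop (nhds 0) := by
    simpa using hlim.sqrt
  refine squeeze_zero (fun t => eunorm_nonneg _) (fun t => ?_) hsqrt
  refine Real.le_sqrt_of_sq_le ?_
  rw [eunorm_sq]
  exact Finset.single_le_sum (f := fun i => (x i t - xbar) ⬝ᵥ (x i t - xbar))
    (fun i _ => dotProduct_self_nonneg_real _) (Finset.mem_univ i)
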